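/- Limited Belief Reasoning is sound and eventually complete with respect to classical reasoning: let KB be an objective formula in conjunctive normal form, α an objective formula, and F a finite set of function terms containing all function terms occurring in KB and α. Then the formula B₀ KB → B_{|F|} α is valid (⊨ˢ B₀ KB → B_{|F|} α) if and only if KB → α is classically valid (⊨ KB → α). -/

import Mathlib

/-! ## Limited belief: basic syntax and semantics (Schwering 2017, quantifier-free). -/

/-- Standard names (a countably infinite supply). -/
abbrev Name := ℕ

/-- Function terms `f(n₁,…,n_j)`: a function symbol applied to standard names. -/
structure FnTerm where
  sym : ℕ
  args : List Name
deriving DecidableEq, Inhabited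

/-- Literals `t ≈ n` (pos) and `t ≉ n` (neg). -/
inductive Lit where
  | pos (t : FnTerm) (n : Name)
  | neg (t : FnTerm) (n : Name)
deriving DecidableEq

instance : Inhabited Lit := ⟨.pos default 0⟩

/-- The left-hand side (function term) of a literal. -/
def Lit.lhs : Lit → FnTerm
  | .pos t _ => t
  | .neg t _ => t

/-- The right-hand side (standard name) of a literal. -/
def Lit.rhs : Lit → Name
  | .pos _ n => n
  | .neg _ n => n

/-- The negation `¬ℓ` of a literal. -/
def Lit.negate : Lit → Lit
  | .pos t n => .neg t n
  | .neg t n => .pos t n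

/-- Names occurring in a literal. -/
def Lit.names (ℓ : Lit) : Finset Name := insert ℓ.rhs ℓ.lhs.args.toFinset

/-- Two literals are complementary iff they are of the form `t ≈ n` and `t ≉ n`,
or of the form `t ≈ n` and `t ≈ n'` for distinct `n, n'`. -/
def Lit.complementary : Lit → Lit → Bool
  | .pos t n, .neg t' n' => t == t' && n == n'
  | .neg t n, .pos t' n' => t == t' && n == n'
  | .pos t n, .pos t' n' => t == t' && n != n'
  | .neg _ _, .neg _ _ => false

/-- A clause is a (finite) set of literals. -/
abbrev Clause := Finset Lit

/-- Unit propagation of clause `c` with literal `ℓ`: remove from `c` all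
literals complementary to `ℓ`. -/
def Clause.prop (c : Clause) (ℓ : Lit) : Clause :=
  c.filter (fun ℓ' => Lit.complementary ℓ' ℓ = false)

/-- `c₁` subsumes `c₂` iff for every `t ≈ n ∈ c₁`, `t ≈ n ∈ c₂` or `t ≉ n' ∈ c₂`
for some `n' ≠ n`, and for every `t ≉ n ∈ c₁`, `t ≉ n ∈ c₂`. -/
def Clause.subsumes (c₁ c₂ : Clause) : Prop :=
  (∀ t n, Lit.pos t n ∈ c₁ → Lit.pos t n ∈ c₂ ∨ ∃ n', n' ≠ n ∧ Lit.neg t n' ∈ c₂) ∧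
  (∀ t n, Lit.neg t n ∈ c₁ → Lit.neg t n ∈ c₂)

/-- `UP s`: the closure of the set of clauses `s` under unit propagation and
subsumption.  `UP s c` means `c ∈ UP(s)`. -/
inductive UP (s : Set Clause) : Clause → Prop
  | mem {c : Clause} : c ∈ s → UP s c
  | unit {c : Clause} {ℓ : Lit} : UP s {ℓ} → UP s c → UP s (c.prop ℓ)
  | sub {c₁ c₂ : Clause} : UP s c₁ → c₁.subsumes c₂ → UP s c₂

/-- Objective formulas: literals (`atom` is `t ≈ n`, `not atom` is `t ≉ n`),
negation and disjunction. -/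
inductive Form where
  | atom (t : FnTerm) (n : Name)
  | not (φ : Form)
  | or (φ ψ : Form)
deriving DecidableEq

/-- `α ∧ β` abbreviates `¬(¬α ∨ ¬β)`. -/
def Form.and (φ ψ : Form) : Form := .not (.or (.not φ) (.not ψ))

/-- `α → β` abbreviates `¬α ∨ β`. -/
def Form.imp (φ ψ : Form) : Form := .or (.not φ) ψ

/-- A formula is (syntactically) a clause iff it is a disjunction of literals. -/
def Form.isClause : Form → Bool
  | .atom _ _ => true
  | .not (.atom _ _) => true
  | .not _ => false
  | .or φ ψ => φ.isClause && ψ.isClause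

/-- The set of literals of a clause-formula. -/
def Form.lits : Form → Clause
  | .atom t n => {Lit.pos t n}
  | .not (.atom t n) => {Lit.neg t n}
  | .not _ => ∅
  | .or φ ψ => φ.lits ∪ ψ.lits

/-- The limited-belief truth relation `s ⊨ˢ α` for objective formulas:
a clause is true iff it is in `UP(s)`; a non-clause disjunction is true iff one
of its disjuncts is; `¬(α ∨ β)` is true iff `¬α` and `¬β` are; `¬¬α` is true
iff `α` is. -/
def sat (s : Set Clause) : Form → Prop
  | .atom t n => UP s {Lit.pos t n}
  | .not (.atom t n) => UP s {Lit.neg t n}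
  | .not (.not φ) => sat s φ
  | .not (.or φ ψ) => sat s (.not φ) ∧ sat s (.not ψ)
  | .or φ ψ => if (Form.or φ ψ).isClause then UP s (Form.or φ ψ).lits
               else sat s φ ∨ sat s ψ

/-- `satB s k α` is `s ⊨ˢ B_k α`: `B₀ α` holds iff `α` does, and `B_{k+1} α`
holds iff for some function term `t`, for all names `n`,
`s ∪ {t ≈ n} ⊨ˢ B_k α`. -/
def satB (s : Set Clause) : ℕ → Form → Prop
  | 0, φ => sat s φ
  | k+1, φ => ∃ t : FnTerm, ∀ n : Name, satB (s ∪ {({Lit.pos t n} : Clause)}) k φ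

/-- A world maps function terms to standard names. -/
abbrev World := FnTerm → Name

/-- Classical truth of a literal in a world. -/
def Lit.holds (w : World) : Lit → Prop
  | .pos t n => w t = n
  | .neg t n => w t ≠ n

/-- Classical truth of a clause in a world. -/
def Clause.holds (w : World) (c : Clause) : Prop := ∃ ℓ ∈ c, ℓ.holds w

/-- Classical truth of an objective formula in a world. -/
def wsat (w : World) : Form → Prop
  | .atom t n => w t = n
  | .not φ => ¬ wsat w φ
  | .or φ ψ => wsat w φ ∨ wsat w ψ

/-- Classical entailment `s ⊨ α`. -/
def entails (s : Set Clause) (φ : Form) : Prop :=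
  ∀ w : World, (∀ c ∈ s, c.holds w) → wsat w φ

/-- Classical entailment of a clause (disjunction of its literals). -/
def entailsClause (s : Set Clause) (c : Clause) : Prop :=
  ∀ w : World, (∀ c' ∈ s, c'.holds w) → c.holds w

/-- Function terms mentioned in a formula. -/
def Form.terms : Form → Finset FnTerm
  | .atom t _ => {t}
  | .not φ => φ.terms
  | .or φ ψ => φ.terms ∪ ψ.terms

/-- Standard names mentioned in a formula. -/
def Form.names : Form → Finset Name
  | .atom t n => insert n t.args.toFinset
  | .not φ => φ.names
  | .or φ ψ => φ.names ∪ ψ.names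
/-- CNF formulas: clauses, or conjunctions of CNF formulas. -/
inductive IsCNF : Form → Prop
  | clause {φ : Form} : φ.isClause = true → IsCNF φ
  | and {φ ψ : Form} : IsCNF φ → IsCNF ψ → IsCNF (Form.and φ ψ)

/-- The set of clauses of a CNF formula. -/
def Form.cnfClauses : Form → Set Clause
  | .not (.or (.not φ) (.not ψ)) => φ.cnfClauses ∪ ψ.cnfClauses
  | φ => if φ.isClause then {φ.lits} else ∅

/-- The formula corresponding to a literal. -/
def Lit.toForm : Lit → Form
  | .pos t n => .atom t n
  | .neg t n => .not (.atom t n)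

/-- `⋁_{ℓ ∈ ls} ℓ ∨ base`. -/
def Form.bigOrLits (ls : List Lit) (base : Form) : Form :=
  ls.foldr (fun ℓ acc => Form.or ℓ.toForm acc) base

/-- The disjunction of a nonempty list of literals (junk on the empty list). -/
def Form.bigOr : List Lit → Form
  | [] => Form.atom default 0
  | [ℓ] => ℓ.toForm
  | ℓ :: ℓ' :: ls => Form.or ℓ.toForm (Form.bigOr (ℓ' :: ls))

/-- The split-early gadget `s_k`: the least set including `s` that, for every
`ℓ ∈ L`, contains the clauses `¬ℓ ∨ c^ord`, `ℓ ∨ ℓʷ₁ ∨ … ∨ ℓʷ_{k-1} ∨ c^ord`,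
and `ℓ ∨ ¬ℓʷ_i ∨ c^ord` for each `i`, where `c^ord = ℓᵒ₁ ∨ … ∨ ℓᵒ_k`. -/
def gadget (s : Set Clause) (L : List Lit) (lws los : List Lit) : Set Clause :=
  s ∪ {c | ∃ ℓ ∈ L,
        c = insert ℓ.negate los.toFinset ∨
        c = insert ℓ (lws.toFinset ∪ los.toFinset) ∨
        ∃ ℓw ∈ lws, c = insert ℓ (insert ℓw.negate los.toFinset)}

/-!
Soundness: unit propagation and subsumption preserve truth in every world, and each split on a term
`t` can be followed at the name `w t`.

Completeness: splitting on all terms of `F` reduces the claim to sets of clauses containing the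
units `t ≈ w t` for `t ∈ F`, one set for each world `w`. Such units make every literal over `F` that
is true in `w` derivable and remove every literal over `F` that is false in `w` from a clause. So
`α` is derived if `w` satisfies it; otherwise `w` falsifies `KB`, the belief in `KB` propagates to
the empty clause, and the empty clause makes every formula true.
-/

section LimitedBelief

variable {s s' : Set Clause} {w : World} {c d : Clause} {ℓ m : Lit} {φ ψ : Form}

theorem Clause.holds_singleton : Clause.holds w {ℓ} ↔ ℓ.holds w := by
  simp [Clause.holds]

theorem Clause.holds_union : Clause.holds w (c ∪ d) ↔ c.holds w ∨ d.holds w := by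
  simp only [Clause.holds, Finset.mem_union, or_and_right, exists_or]

theorem wsat_imp : wsat w (φ.imp ψ) ↔ (wsat w φ → wsat w ψ) :=
  imp_iff_not_or.symm

theorem Form.holds_lits_iff : ∀ {φ : Form}, φ.isClause → (φ.lits.holds w ↔ wsat w φ)
  | .atom _ _, _ => Clause.holds_singleton
  | .not (.atom _ _), _ => Clause.holds_singleton
  | .or φ ψ, hφ => by
    obtain ⟨hφ, hψ⟩ := Bool.and_eq_true_iff.mp hφ
    exact Clause.holds_union.trans (or_congr (holds_lits_iff hφ) (holds_lits_iff hψ))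

theorem Form.lhs_mem_terms_of_mem_lits : ∀ {φ : Form}, ℓ ∈ φ.lits → ℓ.lhs ∈ φ.terms
  | .atom _ _, hℓ => by simp_all [Form.lits, Form.terms, Lit.lhs]
  | .not (.atom _ _), hℓ => by simp_all [Form.lits, Form.terms, Lit.lhs]
  | .or _ _, hℓ => Finset.mem_union.mpr <| (Finset.mem_union.mp hℓ).imp
    lhs_mem_terms_of_mem_lits lhs_mem_terms_of_mem_lits

theorem Lit.complementary_eq_false_of_holds (hℓ : ℓ.holds w) (hm : m.holds w) :
    ℓ.complementary m = false := by
  cases ℓ <;> cases m <;> simp only [Lit.holds, Lit.complementary] at * <;> grind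

theorem Lit.complementary_pos_of_not_holds (hℓ : ¬ ℓ.holds w) :
    ℓ.complementary (.pos ℓ.lhs (w ℓ.lhs)) = true := by
  cases ℓ <;> simp only [Lit.holds, Lit.complementary, Lit.lhs] at * <;> grind

theorem Clause.holds.prop (hc : c.holds w) (hℓ : ℓ.holds w) : (c.prop ℓ).holds w := by
  obtain ⟨m, hmc, hm⟩ := hc
  exact ⟨m, Finset.mem_filter.mpr ⟨hmc, Lit.complementary_eq_false_of_holds hm hℓ⟩, hm⟩

theorem Clause.prop_subset (c : Clause) (ℓ : Lit) : c.prop ℓ ⊆ c :=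
  Finset.filter_subset _ _

theorem Clause.prop_ssubset (hm : m ∈ c) (h : m.complementary ℓ = true) : c.prop ℓ ⊂ c :=
  Finset.filter_ssubset.mpr ⟨m, hm, by simp [h]⟩

theorem Clause.subsumes_of_subset (h : c ⊆ d) : c.subsumes d :=
  ⟨fun _ _ hc => .inl (h hc), fun _ _ hc => h hc⟩

theorem Clause.subsumes.holds (h : c.subsumes d) (hc : c.holds w) : d.holds w := by
  obtain ⟨ℓ, hℓc, hℓ⟩ := hc
  cases ℓ with
  | pos t n =>
    obtain hd | ⟨n', hn', hd⟩ := h.1 t n hℓc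
    · exact ⟨_, hd, hℓ⟩
    · exact ⟨_, hd, fun ht => hn' (ht.symm.trans hℓ)⟩
  | neg t n => exact ⟨_, h.2 t n hℓc, hℓ⟩

namespace UP

theorem mono (hs : s ⊆ s') (h : UP s c) : UP s' c := by
  induction h with
  | mem hc => exact .mem (hs hc)
  | unit _ _ ihℓ ihc => exact .unit ihℓ ihc
  | sub _ hcd ih => exact .sub ih hcd

theorem of_subset (h : UP s c) (hcd : c ⊆ d) : UP s d :=
  .sub h (Clause.subsumes_of_subset hcd)

theorem of_empty (h : UP s ∅) : UP s c :=
  h.of_subset (Finset.empty_subset c)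

theorem sound (h : UP s c) : entailsClause s c := by
  intro w hw
  induction h with
  | mem hc => exact hw _ hc
  | unit _ _ ihℓ ihc => exact ihc.prop (Clause.holds_singleton.mp ihℓ)
  | sub _ hcd ih => exact hcd.holds ih

end UP

theorem sat_mono (hs : s ⊆ s') : ∀ {φ : Form}, sat s φ → sat s' φ
  | .atom _ _, h => by
    rw [sat] at h ⊢
    exact h.mono hs
  | .not (.atom _ _), h => by
    rw [sat] at h ⊢
    exact h.mono hs
  | .not (.not _), h => by
    rw [sat] at h ⊢
    exact sat_mono hs h
  | .not (.or _ _), h => by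
    rw [sat] at h ⊢
    exact h.imp (sat_mono hs) (sat_mono hs)
  | .or φ ψ, h => by
    rw [sat] at h ⊢
    split_ifs at h ⊢
    · exact h.mono hs
    · exact h.imp (sat_mono hs) (sat_mono hs)

theorem sat_of_up_empty (hs : UP s ∅) : ∀ φ : Form, sat s φ
  | .atom _ _ => by
    rw [sat]
    exact hs.of_empty
  | .not (.atom _ _) => by
    rw [sat]
    exact hs.of_empty
  | .not (.not φ) => by
    rw [sat]
    exact sat_of_up_empty hs φ
  | .not (.or φ ψ) => by
    rw [sat]
    exact ⟨sat_of_up_empty hs (.not φ), sat_of_up_empty hs (.not ψ)⟩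
  | .or φ ψ => by
    rw [sat]
    split_ifs
    · exact hs.of_empty
    · exact .inl (sat_of_up_empty hs φ)

theorem sat_sound : ∀ {φ : Form}, sat s φ → entails s φ
  | .atom _ _, h, w, hw => by
    rw [sat] at h
    exact Clause.holds_singleton.mp (h.sound w hw)
  | .not (.atom _ _), h, w, hw => by
    rw [sat] at h
    exact Clause.holds_singleton.mp (h.sound w hw)
  | .not (.not _), h, w, hw => by
    rw [sat] at h
    exact not_not_intro (sat_sound h w hw)
  | .not (.or _ _), h, w, hw => by
    rw [sat] at h
    exact not_or_intro (sat_sound h.1 w hw) (sat_sound h.2 w hw)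
  | .or φ ψ, h, w, hw => by
    rw [sat] at h
    split_ifs at h with hc
    · exact (Form.holds_lits_iff hc).mp (h.sound w hw)
    · exact h.imp (sat_sound · w hw) (sat_sound · w hw)

theorem satB_sound {k : ℕ} (h : satB s k φ) : entails s φ := by
  induction k generalizing s with
  | zero => exact sat_sound h
  | succ k ih =>
    intro w hw
    obtain ⟨t, ht⟩ := h
    refine ih (ht (w t)) w ?_
    rintro c (hc | rfl)
    · exact hw c hc
    · exact Clause.holds_singleton.mpr rfl

/-- `Determines s w T`: the set of clauses `s` fixes the value of every term in `T` to be that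
assigned by the world `w`, in the sense that unit propagation derives `t ≈ w t`. -/
def Determines (s : Set Clause) (w : World) (T : Set FnTerm) : Prop :=
  ∀ t ∈ T, UP s {Lit.pos t (w t)}

theorem Determines.subset {T U : Set FnTerm} (h : Determines s w U) (hTU : T ⊆ U) :
    Determines s w T :=
  fun t ht => h t (hTU ht)

theorem Determines.left (h : Determines s w (φ.or ψ).terms) : Determines s w φ.terms :=
  h.subset (Finset.coe_subset.mpr Finset.subset_union_left)

theorem Determines.right (h : Determines s w (φ.or ψ).terms) : Determines s w ψ.terms :=
  h.subset (Finset.coe_subset.mpr Finset.subset_union_right)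

theorem UP.singleton_of_holds (hs : UP s {Lit.pos ℓ.lhs (w ℓ.lhs)}) (hℓ : ℓ.holds w) :
    UP s {ℓ} := by
  cases ℓ with
  | pos t n => rwa [← show w t = n from hℓ]
  | neg t n =>
    refine hs.sub ⟨fun t' n' h => .inr ⟨n, ?_, ?_⟩, fun t' n' h => ?_⟩ <;>
      simp_all [Lit.holds, Lit.lhs, eq_comm]

theorem UP.empty_of_not_holds (hs : Determines s w (Lit.lhs '' c)) (hc : ¬ c.holds w)
    (h : UP s c) : UP s ∅ := by
  induction c using Finset.strongInduction with
  | H c ih =>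
    obtain rfl | ⟨ℓ, hℓ⟩ := c.eq_empty_or_nonempty
    · exact h
    · have hℓw : ¬ ℓ.holds w := fun hw => hc ⟨ℓ, hℓ, hw⟩
      have hsub := Clause.prop_subset c (.pos ℓ.lhs (w ℓ.lhs))
      exact ih _ (Clause.prop_ssubset hℓ (Lit.complementary_pos_of_not_holds hℓw))
        (hs.subset (Set.image_mono hsub)) (fun ⟨m, hm, hmw⟩ => hc ⟨m, hsub hm, hmw⟩)
        (.unit (hs _ ⟨ℓ, hℓ, rfl⟩) h)

theorem UP.lits_of_wsat (hφ : φ.isClause) (hs : Determines s w φ.terms) (hw : wsat w φ) :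
    UP s φ.lits := by
  obtain ⟨ℓ, hℓ, hℓw⟩ := (Form.holds_lits_iff hφ).mpr hw
  exact (UP.singleton_of_holds (hs _ (Form.lhs_mem_terms_of_mem_lits hℓ)) hℓw).of_subset
    (Finset.singleton_subset_iff.mpr hℓ)

theorem UP.empty_of_not_wsat (hφ : φ.isClause) (hs : Determines s w φ.terms)
    (hw : ¬ wsat w φ) (h : UP s φ.lits) : UP s ∅ := by
  refine h.empty_of_not_holds (hs.subset ?_) (mt (Form.holds_lits_iff hφ).mp hw)
  rintro _ ⟨ℓ, hℓ, rfl⟩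
  exact Form.lhs_mem_terms_of_mem_lits hℓ

theorem sat_of_wsat : ∀ {φ : Form}, Determines s w φ.terms → wsat w φ → sat s φ
  | .atom t n, hs, hw => by
    rw [sat]
    exact UP.lits_of_wsat (φ := .atom t n) rfl hs hw
  | .not (.atom t n), hs, hw => by
    rw [sat]
    exact UP.lits_of_wsat (φ := .not (.atom t n)) rfl hs hw
  | .not (.not φ), hs, hw => by
    rw [sat]
    exact sat_of_wsat (φ := φ) hs (not_not.mp hw)
  | .not (.or φ ψ), hs, hw => by
    rw [sat]
    obtain ⟨hφ, hψ⟩ := not_or.mp hw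
    exact ⟨sat_of_wsat (φ := .not φ) (Determines.left hs) hφ,
      sat_of_wsat (φ := .not ψ) (Determines.right hs) hψ⟩
  | .or φ ψ, hs, hw => by
    rw [sat]
    split_ifs with hc
    · exact UP.lits_of_wsat hc hs hw
    · exact hw.imp (sat_of_wsat hs.left) (sat_of_wsat hs.right)

theorem up_empty_of_sat_of_not_wsat :
    ∀ {φ : Form}, Determines s w φ.terms → sat s φ → ¬ wsat w φ → UP s ∅
  | .atom t n, hs, h, hw => by
    rw [sat] at h
    exact UP.empty_of_not_wsat (φ := .atom t n) rfl hs hw h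
  | .not (.atom t n), hs, h, hw => by
    rw [sat] at h
    exact UP.empty_of_not_wsat (φ := .not (.atom t n)) rfl hs hw h
  | .not (.not φ), hs, h, hw => by
    rw [sat] at h
    exact up_empty_of_sat_of_not_wsat (φ := φ) hs h (mt not_not_intro hw)
  | .not (.or φ ψ), hs, h, hw => by
    rw [sat] at h
    obtain hφ | hψ := not_not.mp hw
    · exact up_empty_of_sat_of_not_wsat (φ := .not φ) (Determines.left hs) h.1 (not_not_intro hφ)
    · exact up_empty_of_sat_of_not_wsat (φ := .not ψ) (Determines.right hs) h.2 (not_not_intro hψ)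
  | .or φ ψ, hs, h, hw => by
    rw [sat] at h
    split_ifs at h with hc
    · exact UP.empty_of_not_wsat hc hs hw h
    · obtain ⟨hφ, hψ⟩ := not_or.mp hw
      exact h.elim (up_empty_of_sat_of_not_wsat hs.left · hφ)
        (up_empty_of_sat_of_not_wsat hs.right · hψ)

/-- The diagram of the world `w` on `T`: the unit clauses `t ≈ w t` for `t ∈ T`. These are the
clauses accumulated by splitting on every term of `T` along the branch chosen by `w`. -/
def World.diagram (w : World) (T : Set FnTerm) : Set Clause :=
  (fun t => {Lit.pos t (w t)}) '' T

theorem World.holds_of_mem_diagram {T : Set FnTerm} (hc : c ∈ w.diagram T) : c.holds w := by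
  obtain ⟨t, -, rfl⟩ := hc
  exact Clause.holds_singleton.mpr rfl

theorem World.determines_of_diagram_subset {T : Set FnTerm} (h : w.diagram T ⊆ s) :
    Determines s w T :=
  fun _ ht => .mem (h (Set.mem_image_of_mem _ ht))

theorem World.diagram_update_insert {T : Set FnTerm} {t : FnTerm} (ht : t ∉ T) (n : Name) :
    World.diagram (Function.update w t n) (insert t T) = insert {Lit.pos t n} (w.diagram T) := by
  have hagree : Set.EqOn (fun u => ({Lit.pos u (Function.update w t n u)} : Clause))
      (fun u => {Lit.pos u (w u)}) T := fun u hu => by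
    simp only [Function.update_of_ne (ne_of_mem_of_not_mem hu ht)]
  rw [World.diagram, Set.image_insert_eq, Set.image_congr hagree, Function.update_self,
    World.diagram]

theorem satB_card_of_forall_sat {F : Finset FnTerm}
    (h : ∀ w : World, sat (s ∪ w.diagram F) φ) : satB s F.card φ := by
  induction F using Finset.induction_on generalizing s with
  | empty => simpa [satB, World.diagram] using h fun _ => 0
  | insert t F ht ih =>
    rw [Finset.card_insert_of_notMem ht]
    refine ⟨t, fun n => ih fun w => ?_⟩
    have hw := h (Function.update w t n)
    rwa [Finset.coe_insert, World.diagram_update_insert (Finset.mem_coe.not.mpr ht),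
      Set.insert_eq, ← Set.union_assoc] at hw

theorem satB_card_of_sat {KB α : Form} {F : Finset FnTerm} (hKBF : KB.terms ⊆ F)
    (hαF : α.terms ⊆ F) (h : ∀ w : World, wsat w KB → wsat w α) (hKB : sat s KB) :
    satB s F.card α := by
  refine satB_card_of_forall_sat fun w => ?_
  have hF : Determines (s ∪ w.diagram F) w F :=
    World.determines_of_diagram_subset Set.subset_union_right
  by_cases hw : wsat w KB
  · exact sat_of_wsat (hF.subset hαF) (h w hw)
  · exact sat_of_up_empty (up_empty_of_sat_of_not_wsat (hF.subset hKBF)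
      (sat_mono Set.subset_union_left hKB) hw) α

end LimitedBelief

theorem lbr_sound_eventually_complete_general (KB α : Form) (F : Finset FnTerm)
    (hKBF : KB.terms ⊆ F) (hαF : α.terms ⊆ F) :
    (∀ s : Set Clause, satB s 0 KB → satB s F.card α) ↔
      (∀ w : World, wsat w (Form.imp KB α)) := by
  simp only [wsat_imp]
  refine ⟨fun h w hKB => ?_, fun h s => satB_card_of_sat hKBF hαF h⟩
  have hsat : sat (w.diagram KB.terms) KB :=
    sat_of_wsat (World.determines_of_diagram_subset subset_rfl) hKB
  exact satB_sound (h _ hsat) w fun _ => World.holds_of_mem_diagram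

/-- **Limited Belief Reasoning is sound and eventually complete** w.r.t.
classical reasoning: for `KB` in CNF and `F` containing all function terms of
`KB` and `α`, the formula `B₀ KB → B_{|F|} α` is valid iff `KB → α` is
classically valid. -/
theorem lbr_sound_eventually_complete (KB α : Form) (hKB : IsCNF KB)
    (F : Finset FnTerm) (hKBF : KB.terms ⊆ F) (hαF : α.terms ⊆ F) :
    (∀ s' : Set Clause, satB s' 0 KB → satB s' F.card α) ↔
      (∀ w : World, wsat w (Form.imp KB α)) :=
  lbr_sound_eventually_complete_general KB α F hKBF hαF
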